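/- arXiv:2406.07311 — 2 statements merged into one kernel-verified Lean document; each statement's English description precedes it below -/
import Mathlib

section
/- Let n ≥ 5, let λ be a partition of n having p parts equal to 1 and q parts equal to 2, let 1 ≤ i₁ < i₂ < i₃ ≤ n, and let a₄ ≠ a₅ be elements of {1,…,n} \ {i₁,i₂,i₃}. Then each of the three sets {π ∈ C_λ : π(i₁)=i₁, π(i₂)=a₄, π(i₃)=a₅}, {π ∈ C_λ : π(i₁)=a₄, π(i₂)=i₂, π(i₃)=a₅}, and {π ∈ C_λ : π(i₁)=a₄, π(i₂)=a₅, π(i₃)=i₃} has cardinality m satisfying (as an identity of integers) n(n−1)(n−2)(n−3)(n−4) · m = (p³ + 3p² + 2pq − n(2p² + 3p) + n²p) · |C_λ|. -/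
open Equiv Finset

/-- The conjugacy class of permutations of `Fin n` with cycle type `lam`
(cycle type includes fixed points as parts of size 1, via `Equiv.Perm.partition`). -/
def conjClass (n : ℕ) (lam : n.Partition) : Finset (Equiv.Perm (Fin n)) :=
  Finset.univ.filter fun π => (Equiv.Perm.partition π).parts = lam.parts

/-!
Double count the pairs `(f, π)` where `f` is a 5-tuple of distinct points and `π ∈ C_λ` fixes `f 0`
and maps `f 1 ↦ f 3`, `f 2 ↦ f 4`. The symmetric group is 5-transitive and `C_λ` is stable under
conjugation, so every tuple lies in the same number `m` of pairs. On the other side, `π` lies in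
`p (s (s - 3) + 2 q)` pairs with `s = n - p`: choose a fixed point, then a moved point `y`, then a
moved point outside `{y, π y, π⁻¹ y}`, a set of three elements unless `y` is one of the `2 q` points
on a 2-cycle, when it has two.
-/

section CycleLengths

variable {α : Type*} [Fintype α] [DecidableEq α]

theorem card_support_cycleOf_dvd_iff {π : Perm α} {x : α} (hx : π x ≠ x) (k : ℕ) :
    #(π.cycleOf x).support ∣ k ↔ (π ^ k) x = x := by
  have hcycle : (π.cycleOf x).IsCycle := Perm.isCycle_cycleOf π hx
  have hmoves : π.cycleOf x x ≠ x := by rwa [Perm.cycleOf_apply_self]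
  rw [← hcycle.orderOf, orderOf_dvd_iff_pow_eq_one, hcycle.pow_eq_one_iff' hmoves,
    Perm.cycleOf_pow_apply_self]

theorem card_support_cycleOf_eq_two_iff {π : Perm α} {x : α} (hx : π x ≠ x) :
    #(π.cycleOf x).support = 2 ↔ π (π x) = x := by
  have htwo : 2 ≤ #(π.cycleOf x).support := Perm.two_le_card_support_cycleOf_iff.mpr hx
  rw [← Perm.mul_apply, ← pow_two, ← card_support_cycleOf_dvd_iff hx]
  exact ⟨fun h => h.dvd, fun h => (Nat.le_of_dvd two_pos h).antisymm htwo⟩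

theorem filter_cycleOf_eq_support {π c : Perm α} (hc : c ∈ π.cycleFactorsFinset) :
    {x ∈ π.support | π.cycleOf x = c} = c.support := by
  ext x
  rw [mem_filter]
  constructor
  · rintro ⟨hx, rfl⟩
    exact Perm.mem_support_cycleOf_iff.mpr ⟨.refl _ _, hx⟩
  · intro hx
    exact ⟨Perm.mem_cycleFactorsFinset_support_le hc hx, (Perm.cycle_is_cycleOf hx hc).symm⟩

theorem count_cycleType_eq_card_filter (π : Perm α) (k : ℕ) :
    π.cycleType.count k = #{c ∈ π.cycleFactorsFinset | #c.support = k} := by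
  simp only [Perm.cycleType_def, Multiset.count_map, Function.comp_apply, eq_comm (a := k),
    ← filter_val, card_val]

theorem card_filter_card_support_cycleOf_eq (π : Perm α) (k : ℕ) :
    #{x ∈ π.support | #(π.cycleOf x).support = k} = k * π.cycleType.count k := by
  have hfiber (c) (hc : c ∈ π.cycleFactorsFinset.filter fun c => #c.support = k) :
      #{x ∈ π.support.filter fun x => #(π.cycleOf x).support = k | π.cycleOf x = c} = k := by
    obtain ⟨hc, hk⟩ := mem_filter.mp hc
    rw [filter_filter, ← hk, ← filter_cycleOf_eq_support hc]
    congr 1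
    refine filter_congr fun x _ => and_iff_right_of_imp ?_
    rintro rfl
    rw [filter_cycleOf_eq_support hc]
  rw [card_eq_sum_card_fiberwise (f := π.cycleOf)
      (t := π.cycleFactorsFinset.filter fun c => #c.support = k),
    sum_congr rfl hfiber, sum_const, smul_eq_mul, mul_comm, count_cycleType_eq_card_filter]
  intro x hx
  obtain ⟨hx, hk⟩ := mem_filter.mp hx
  exact mem_filter.mpr ⟨Perm.cycleOf_mem_cycleFactorsFinset_iff.mpr hx, hk⟩

theorem count_one_parts_partition (π : Perm α) : π.partition.parts.count 1 = #π.supportᶜ := by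
  have hcycleType : 1 ∉ π.cycleType := fun h => (Perm.one_lt_of_mem_cycleType h).false
  rw [Perm.parts_partition, Multiset.count_add, Multiset.count_eq_zero_of_notMem hcycleType,
    Multiset.count_replicate_self, zero_add, card_compl]

theorem count_parts_partition_of_ne_one (π : Perm α) {k : ℕ} (hk : k ≠ 1) :
    π.partition.parts.count k = π.cycleType.count k := by
  rw [Perm.parts_partition, Multiset.count_add, Multiset.count_replicate, if_neg hk.symm, add_zero]

theorem card_filter_apply_apply_eq_self (π : Perm α) :
    #{x ∈ π.support | π (π x) = x} = 2 * π.partition.parts.count 2 := by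
  rw [count_parts_partition_of_ne_one π (by decide), ← card_filter_card_support_cycleOf_eq]
  exact congrArg card <| filter_congr fun x hx =>
    (card_support_cycleOf_eq_two_iff (Perm.mem_support.mp hx)).symm

end CycleLengths

section DisjointArrows

variable {α : Type*} [DecidableEq α]

theorem card_neighbors_add_ite {π : Perm α} {y : α} (hy : π y ≠ y) :
    #{y, π y, π⁻¹ y} + (if π (π y) = y then 1 else 0) = 3 := by
  have hinv : y ≠ π⁻¹ y := by rwa [Ne, Perm.eq_inv_iff_eq]
  split_ifs with hsq
  · rw [← Perm.eq_inv_iff_eq.mpr hsq, pair_eq_singleton, card_pair hy.symm]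
  · rw [card_eq_three.mpr ⟨_, _, _, hy.symm, hinv, mt Perm.eq_inv_iff_eq.mp hsq, rfl⟩]

variable [Fintype α]

/-- The ordered pairs `(y, z)` of non-fixed points of `π` for which the arrows `y ↦ π y` and
`z ↦ π z` share no endpoint. -/
def disjointArrows (π : Perm α) : Finset (α × α) :=
  {t ∈ π.support ×ˢ π.support | t.2 ∉ ({t.1, π t.1, π⁻¹ t.1} : Finset α)}

theorem nodup_iff_mem_disjointArrows {π : Perm α} {x y z : α} (hx : π x = x) :
    [x, y, z, π y, π z].Nodup ↔ (y, z) ∈ disjointArrows π := by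
  have hfix (w : α) : π w = x ↔ w = x := by rw [← π.injective.eq_iff (a := w), hx]
  simp only [disjointArrows, mem_filter, mem_product, Perm.mem_support, mem_insert, mem_singleton,
    Perm.eq_inv_iff_eq, List.nodup_cons, List.mem_cons, List.not_mem_nil]
  grind [π.injective.eq_iff]

theorem card_support_sdiff_neighbors {π : Perm α} {y : α} (hy : y ∈ π.support) :
    (#(π.support \ {y, π y, π⁻¹ y}) : ℤ) = #π.support - 3 + if π (π y) = y then 1 else 0 := by
  have hsub : {y, π y, π⁻¹ y} ⊆ π.support := by
    simp only [insert_subset_iff, singleton_subset_iff, hy, Perm.apply_mem_support, true_and]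
    rwa [← Perm.support_inv, Perm.apply_mem_support, Perm.support_inv]
  have hcard := card_neighbors_add_ite (Perm.mem_support.mp hy)
  rw [cast_card_sdiff hsub, ← Nat.cast_ofNat (n := 3), ← hcard]
  push_cast
  ring

theorem card_disjointArrows (π : Perm α) :
    (#(disjointArrows π) : ℤ) =
      #π.support * (#π.support - 3) + 2 * π.partition.parts.count 2 := by
  calc (#(disjointArrows π) : ℤ)
      = ∑ y ∈ π.support, (#(π.support \ {y, π y, π⁻¹ y}) : ℤ) := by
        simp only [disjointArrows, card_filter, sum_product, sdiff_eq_filter, Nat.cast_sum]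
    _ = ∑ y ∈ π.support, ((#π.support : ℤ) - 3 + if π (π y) = y then 1 else 0) :=
        sum_congr rfl fun _ => card_support_sdiff_neighbors
    _ = #π.support * (#π.support - 3) + 2 * π.partition.parts.count 2 := by
        rw [sum_add_distrib, sum_const, nsmul_eq_mul, sum_boole, card_filter_apply_apply_eq_self]
        push_cast
        rfl

end DisjointArrows

section Pattern

variable {α : Type*}

/-- The pattern whose occurrences are counted: `π` fixes the entry `0` of `f`, and maps the entries
`1` and `2` to the entries `3` and `4`. Taking `f` to be an embedding makes the five entries
distinct. -/
def MatchesPattern (f : Fin 5 ↪ α) (π : Perm α) : Prop :=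
  π (f 0) = f 0 ∧ π (f 1) = f 3 ∧ π (f 2) = f 4

instance [DecidableEq α] (f : Fin 5 ↪ α) (π : Perm α) : Decidable (MatchesPattern f π) :=
  inferInstanceAs (Decidable (_ ∧ _ ∧ _))

theorem MatchesPattern.conj {f : Fin 5 ↪ α} {π : Perm α} (h : MatchesPattern f π) (σ : Perm α) :
    MatchesPattern (σ • f) (σ * π * σ⁻¹) := by
  simpa [MatchesPattern] using h

variable [Fintype α] [DecidableEq α]

theorem card_filter_matchesPattern (π : Perm α) :
    #{f | MatchesPattern f π} = #π.supportᶜ * #(disjointArrows π) := by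
  rw [← card_product]
  refine card_bij (fun f _ => (f 0, f 1, f 2)) ?_ ?_ ?_
  · intro f hf
    obtain ⟨h0, h1, h2⟩ := (mem_filter.mp hf).2
    have hnodup : [f 0, f 1, f 2, π (f 1), π (f 2)].Nodup := by
      rw [h1, h2]
      exact List.nodup_ofFn.mpr f.injective
    exact mem_product.mpr ⟨by simpa using h0, (nodup_iff_mem_disjointArrows h0).mp hnodup⟩
  · intro f hf g hg hfg
    obtain ⟨-, hf1, hf2⟩ := (mem_filter.mp hf).2
    obtain ⟨-, hg1, hg2⟩ := (mem_filter.mp hg).2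
    obtain ⟨h0, h1, h2⟩ : f 0 = g 0 ∧ f 1 = g 1 ∧ f 2 = g 2 := by simpa using hfg
    have h3 : f 3 = g 3 := by rw [← hf1, ← hg1, h1]
    have h4 : f 4 = g 4 := by rw [← hf2, ← hg2, h2]
    ext i
    fin_cases i
    exacts [h0, h1, h2, h3, h4]
  · rintro ⟨x, y, z⟩ hxyz
    obtain ⟨hx, hyz⟩ := mem_product.mp hxyz
    have hfix : π x = x := by simpa using hx
    have hnodup := (nodup_iff_mem_disjointArrows hfix).mpr hyz
    exact ⟨⟨[x, y, z, π y, π z].get, List.nodup_iff_injective_get.mp hnodup⟩,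
      mem_filter.mpr ⟨mem_univ _, hfix, rfl, rfl⟩, rfl⟩

theorem card_filter_matchesPattern_eq_parts_partition (π : Perm α) :
    (#{f | MatchesPattern f π} : ℤ) =
      π.partition.parts.count 1 *
        ((Fintype.card α - π.partition.parts.count 1) *
            (Fintype.card α - π.partition.parts.count 1 - 3) +
          2 * π.partition.parts.count 2) := by
  have hsupport : (#π.support : ℤ) = Fintype.card α - π.partition.parts.count 1 := by
    rw [count_one_parts_partition, ← card_add_card_compl π.support, Nat.cast_add,
      add_sub_cancel_right]
  rw [card_filter_matchesPattern, Nat.cast_mul, card_disjointArrows, hsupport,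
    ← count_one_parts_partition]

end Pattern

section DoubleCounting

variable {G X : Type*} [Group G] [MulAction G X] [MulAction.IsPretransitive G X]

theorem card_filter_eq_of_conj_invariant {C : Finset G} (hC : ∀ g ∈ C, ∀ h, h * g * h⁻¹ ∈ C)
    {r : X → G → Prop} [∀ x g, Decidable (r x g)]
    (hr : ∀ {x g}, r x g → ∀ h : G, r (h • x) (h * g * h⁻¹)) (x y : X) :
    #{g ∈ C | r x g} = #{g ∈ C | r y g} := by
  have hle (x y : X) : #{g ∈ C | r x g} ≤ #{g ∈ C | r y g} := by
    obtain ⟨h, rfl⟩ := MulAction.exists_smul_eq G x y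
    refine card_le_card_of_injOn (MulAut.conj h) (fun g hg => ?_) (MulAut.conj h).injective.injOn
    obtain ⟨hgC, hgr⟩ := mem_filter.mp hg
    exact mem_filter.mpr ⟨hC g hgC h, hr hgr h⟩
  exact (hle x y).antisymm (hle y x)

theorem card_mul_card_filter_eq_sum_of_conj_invariant [Fintype X] {C : Finset G}
    (hC : ∀ g ∈ C, ∀ h, h * g * h⁻¹ ∈ C) {r : X → G → Prop} [∀ x g, Decidable (r x g)]
    (hr : ∀ {x g}, r x g → ∀ h : G, r (h • x) (h * g * h⁻¹)) (x : X) :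
    Fintype.card X * #{g ∈ C | r x g} = ∑ g ∈ C, #{y | r y g} := by
  calc Fintype.card X * #{g ∈ C | r x g}
      = ∑ y : X, #{g ∈ C | r y g} := by
        rw [sum_congr rfl fun y _ => card_filter_eq_of_conj_invariant hC hr y x, sum_const,
          card_univ, smul_eq_mul]
    _ = ∑ g ∈ C, #{y | r y g} := sum_card_bipartiteAbove_eq_sum_card_bipartiteBelow r

end DoubleCounting

theorem cast_descFactorial_five {R : Type*} [Ring R] (n : ℕ) :
    (n.descFactorial 5 : R) = n * (n - 1) * (n - 2) * (n - 3) * (n - 4) := by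
  rw [← descPochhammer_eval_eq_descFactorial]
  simp [descPochhammer_succ_eval]

section ConjClass

variable {n : ℕ} {lam : n.Partition}

theorem conj_mem_conjClass {π : Perm (Fin n)} (hπ : π ∈ conjClass n lam) (σ : Perm (Fin n)) :
    σ * π * σ⁻¹ ∈ conjClass n lam := by
  have hconj : IsConj π (σ * π * σ⁻¹) := isConj_iff.mpr ⟨σ, rfl⟩
  simpa [conjClass, ← Perm.partition_eq_of_isConj.mp hconj] using hπ

theorem descFactorial_mul_card_conjClass_filter_matchesPattern (f : Fin 5 ↪ Fin n) :
    (n.descFactorial 5 : ℤ) * #{π ∈ conjClass n lam | MatchesPattern f π} =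
      lam.parts.count 1 * ((n - lam.parts.count 1) * (n - lam.parts.count 1 - 3) +
        2 * lam.parts.count 2) * #(conjClass n lam) := by
  have htransitive := Perm.isMultiplyPretransitive (Fin n) 5
  have hdouble := card_mul_card_filter_eq_sum_of_conj_invariant
    (fun _ => conj_mem_conjClass (lam := lam)) (r := MatchesPattern) MatchesPattern.conj f
  have hconst (π) (hπ : π ∈ conjClass n lam) :
      (#{f | MatchesPattern f π} : ℤ) =
        lam.parts.count 1 * ((n - lam.parts.count 1) * (n - lam.parts.count 1 - 3) +
          2 * lam.parts.count 2) := by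
    have hcount := card_filter_matchesPattern_eq_parts_partition π
    rwa [(mem_filter.mp hπ).2, Fintype.card_fin] at hcount
  rw [Fintype.card_embedding_eq, Fintype.card_fin, Fintype.card_fin] at hdouble
  rw [← Nat.cast_mul, hdouble, Nat.cast_sum, sum_congr rfl hconst, sum_const, nsmul_eq_mul,
    mul_comm]

theorem mul_card_conjClass_filter_fix_and_map {x y z a b : Fin n}
    (hnodup : [x, y, z, a, b].Nodup) :
    (n : ℤ) * (n - 1) * (n - 2) * (n - 3) * (n - 4) *
        #{π ∈ conjClass n lam | π x = x ∧ π y = a ∧ π z = b} =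
      ((lam.parts.count 1 : ℤ) ^ 3 + 3 * (lam.parts.count 1 : ℤ) ^ 2
          + 2 * (lam.parts.count 1 : ℤ) * (lam.parts.count 2 : ℤ)
          - n * (2 * (lam.parts.count 1 : ℤ) ^ 2 + 3 * (lam.parts.count 1 : ℤ))
          + (n : ℤ) ^ 2 * (lam.parts.count 1 : ℤ)) * #(conjClass n lam) := by
  have hcount := descFactorial_mul_card_conjClass_filter_matchesPattern (lam := lam)
    ⟨[x, y, z, a, b].get, List.nodup_iff_injective_get.mp hnodup⟩
  rw [cast_descFactorial_five] at hcount
  refine hcount.trans ?_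
  ring

end ConjClass

theorem stmt4 (n : ℕ) (hn : 5 ≤ n) (lam : n.Partition)
    (p q : ℕ) (hp : p = lam.parts.count 1) (hq : q = lam.parts.count 2)
    (i₁ i₂ i₃ : Fin n) (h12 : i₁ < i₂) (h23 : i₂ < i₃)
    (a₄ a₅ : Fin n) (ha45 : a₄ ≠ a₅)
    (ha41 : a₄ ≠ i₁) (ha42 : a₄ ≠ i₂) (ha43 : a₄ ≠ i₃)
    (ha51 : a₅ ≠ i₁) (ha52 : a₅ ≠ i₂) (ha53 : a₅ ≠ i₃) :
    ((n : ℤ) * ((n : ℤ) - 1) * ((n : ℤ) - 2) * ((n : ℤ) - 3) * ((n : ℤ) - 4) *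
        (((conjClass n lam).filter fun π => π i₁ = i₁ ∧ π i₂ = a₄ ∧ π i₃ = a₅).card : ℤ)
      = ((p : ℤ) ^ 3 + 3 * (p : ℤ) ^ 2 + 2 * (p : ℤ) * (q : ℤ)
          - (n : ℤ) * (2 * (p : ℤ) ^ 2 + 3 * (p : ℤ)) + (n : ℤ) ^ 2 * (p : ℤ)) *
        ((conjClass n lam).card : ℤ)) ∧
    ((n : ℤ) * ((n : ℤ) - 1) * ((n : ℤ) - 2) * ((n : ℤ) - 3) * ((n : ℤ) - 4) *
        (((conjClass n lam).filter fun π => π i₁ = a₄ ∧ π i₂ = i₂ ∧ π i₃ = a₅).card : ℤ)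
      = ((p : ℤ) ^ 3 + 3 * (p : ℤ) ^ 2 + 2 * (p : ℤ) * (q : ℤ)
          - (n : ℤ) * (2 * (p : ℤ) ^ 2 + 3 * (p : ℤ)) + (n : ℤ) ^ 2 * (p : ℤ)) *
        ((conjClass n lam).card : ℤ)) ∧
    ((n : ℤ) * ((n : ℤ) - 1) * ((n : ℤ) - 2) * ((n : ℤ) - 3) * ((n : ℤ) - 4) *
        (((conjClass n lam).filter fun π => π i₁ = a₄ ∧ π i₂ = a₅ ∧ π i₃ = i₃).card : ℤ)
      = ((p : ℤ) ^ 3 + 3 * (p : ℤ) ^ 2 + 2 * (p : ℤ) * (q : ℤ)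
          - (n : ℤ) * (2 * (p : ℤ) ^ 2 + 3 * (p : ℤ)) + (n : ℤ) ^ 2 * (p : ℤ)) *
        ((conjClass n lam).card : ℤ)) := by
  subst hp hq
  have hne : i₁ ≠ i₂ ∧ i₂ ≠ i₃ ∧ i₁ ≠ i₃ := ⟨h12.ne, h23.ne, (h12.trans h23).ne⟩
  have hnodup₁ : [i₁, i₂, i₃, a₄, a₅].Nodup := by grind
  have hnodup₂ : [i₂, i₁, i₃, a₄, a₅].Nodup := by grind
  have hnodup₃ : [i₃, i₁, i₂, a₄, a₅].Nodup := by grind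
  refine ⟨mul_card_conjClass_filter_fix_and_map hnodup₁, ?_, ?_⟩
  · simpa only [and_left_comm] using mul_card_conjClass_filter_fix_and_map (lam := lam) hnodup₂
  · simpa only [and_rotate] using mul_card_conjClass_filter_fix_and_map (lam := lam) hnodup₃
end

section
/- Let n ≥ 6, let λ be a partition of n having p parts equal to 1, q parts equal to 2, and r parts equal to 3, let 1 ≤ i₁ < i₂ < i₃ ≤ n, and let a₄, a₅, a₆ be pairwise distinct elements of {1,…,n} \ {i₁,i₂,i₃}. Then the set {π ∈ C_λ : π(i₁)=a₄, π(i₂)=a₅, π(i₃)=a₆} has cardinality m satisfying (as an identity of integers) n(n−1)(n−2)(n−3)(n−4)(n−5) · m = (n³ − n²(3p+9) + n(3p² + 18p + 6q + 20) − p³ − 9p² − 20p − 6pq − 24q − 6r) · |C_λ|. -/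
open Equiv Finset

/-!
Count the pairs `(π, t)` with `π` in the conjugacy class and `t` an injective sextuple
`(x₁, x₂, x₃, y₁, y₂, y₃)` such that `π xᵢ = yᵢ`. The symmetric group is transitive on injective
sextuples and conjugation preserves the class, so every sextuple occurs equally often.

For a fixed `π`, such a sextuple amounts to three non-fixed points, pairwise distinct and pairwise
not adjacent in the functional graph of `π`. Inclusion–exclusion over the three pairs expresses the
number of these triples through the sizes of closed neighbourhoods and of their intersections. These
depend only on whether the point lies in a cycle of length 2, of length 3, or longer.
-/

section DoubleCounting

variable {G X : Type*} [Group G] [MulAction G X] {C : Finset G} {R : G → X → Prop}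
  [∀ σ x, Decidable (R σ x)]

theorem card_filter_rel_smul (hC : ∀ g σ, g * σ * g⁻¹ ∈ C ↔ σ ∈ C)
    (hR : ∀ g σ x, R (g * σ * g⁻¹) (g • x) ↔ R σ x) (g : G) (x : X) :
    #{σ ∈ C | R σ (g • x)} = #{σ ∈ C | R σ x} :=
  (card_equiv (MulAut.conj g).toEquiv fun σ => by simp [hC, hR]).symm

theorem card_mul_card_filter_rel [Fintype X] [MulAction.IsPretransitive G X]
    (hC : ∀ g σ, g * σ * g⁻¹ ∈ C ↔ σ ∈ C)
    (hR : ∀ g σ x, R (g * σ * g⁻¹) (g • x) ↔ R σ x) (x₀ : X) :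
    Fintype.card X * #{σ ∈ C | R σ x₀} = ∑ σ ∈ C, #{x | R σ x} := by
  have card_fiber (x : X) : #{σ ∈ C | R σ x} = #{σ ∈ C | R σ x₀} := by
    obtain ⟨g, rfl⟩ := MulAction.exists_smul_eq G x₀ x
    exact card_filter_rel_smul hC hR g x₀
  calc Fintype.card X * #{σ ∈ C | R σ x₀}
      = ∑ x : X, #{σ ∈ C | R σ x} := by simp [card_fiber]
    _ = ∑ σ ∈ C, #{x | R σ x} :=
      (sum_card_bipartiteAbove_eq_sum_card_bipartiteBelow R).symm

end DoubleCounting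

section IndependentTriples

variable {α : Type*}

theorem sum_one_sub_mul_one_sub_mul_one_sub {R : Type*} [CommRing R] (S : Finset α) (d : α → α → R)
    (hd : ∀ x y, d x y = d y x) :
    ∑ x ∈ S, ∑ y ∈ S, ∑ z ∈ S, (1 - d x y) * (1 - d y z) * (1 - d x z) =
      (#S : R) ^ 3 - 3 * #S * ∑ x ∈ S, ∑ y ∈ S, d x y + 3 * ∑ x ∈ S, (∑ y ∈ S, d x y) ^ 2
        - ∑ x ∈ S, ∑ y ∈ S, ∑ z ∈ S, d x y * d y z * d x z := by
  have path_at_fst : ∑ x ∈ S, ∑ y ∈ S, ∑ z ∈ S, d x y * d x z = ∑ x ∈ S, (∑ y ∈ S, d x y) ^ 2 := by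
    simp only [sq, sum_mul_sum]
  have path_at_snd :
      ∑ x ∈ S, ∑ y ∈ S, ∑ z ∈ S, d x y * d y z = ∑ x ∈ S, (∑ y ∈ S, d x y) ^ 2 := by
    rw [sum_comm, ← path_at_fst]
    simp only [hd]
  have path_at_thd :
      ∑ x ∈ S, ∑ y ∈ S, ∑ z ∈ S, d y z * d x z = ∑ x ∈ S, (∑ y ∈ S, d x y) ^ 2 := by
    rw [← path_at_snd]
    refine sum_congr rfl fun x _ => sum_comm.trans (sum_congr rfl fun z _ => ?_)
    exact sum_congr rfl fun y _ => by rw [hd y z, mul_comm]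
  calc ∑ x ∈ S, ∑ y ∈ S, ∑ z ∈ S, (1 - d x y) * (1 - d y z) * (1 - d x z)
      = ∑ x ∈ S, ∑ y ∈ S, ∑ z ∈ S, (1 - d x y - d y z - d x z + d x y * d x z
          + d x y * d y z + d y z * d x z - d x y * d y z * d x z) := by
        refine sum_congr rfl fun x _ => sum_congr rfl fun y _ => sum_congr rfl fun z _ => ?_
        ring
    _ = _ := by
        simp only [sum_add_distrib, sum_sub_distrib, path_at_fst, path_at_snd, path_at_thd,
          sum_const, nsmul_eq_mul]
        simp only [← mul_sum]
        ring

variable [DecidableEq α]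

theorem card_filter_pairwise_notMem_eq_sum [Fintype α] (S : Finset α) (N : α → Finset α)
    (hN : ∀ x y, y ∈ N x ↔ x ∈ N y) :
    (#{u : Fin 3 → α | (∀ i, u i ∈ S) ∧ ∀ i j, i ≠ j → u j ∉ N (u i)} : ℤ) =
      ∑ x ∈ S, ∑ y ∈ S, ∑ z ∈ S, (1 - if y ∈ N x then (1 : ℤ) else 0) *
        (1 - if z ∈ N y then 1 else 0) * (1 - if z ∈ N x then 1 else 0) := by
  have card_eq : #{u : Fin 3 → α | (∀ i, u i ∈ S) ∧ ∀ i j, i ≠ j → u j ∉ N (u i)} =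
      #{w ∈ S ×ˢ S ×ˢ S | (w.2.1 ∉ N w.1 ∧ w.2.2 ∉ N w.2.1) ∧ w.2.2 ∉ N w.1} := by
    refine card_nbij' (fun u => (u 0, u 1, u 2)) (fun w => ![w.1, w.2.1, w.2.2]) ?_ ?_ ?_ ?_
    · simp only [coe_filter, Set.MapsTo, Set.mem_ofPred_eq, mem_product, mem_univ, true_and]
      exact fun u hu => ⟨⟨hu.1 0, hu.1 1, hu.1 2⟩,
        ⟨hu.2 0 1 (by decide), hu.2 1 2 (by decide)⟩, hu.2 0 2 (by decide)⟩
    · intro w hw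
      simp_all [Fin.forall_fin_succ]
    · intro u _
      ext i
      fin_cases i <;> rfl
    · intro w _
      rfl
  simp only [card_eq, card_filter, sum_product, Nat.cast_sum]
  refine sum_congr rfl fun x _ => sum_congr rfl fun y _ => sum_congr rfl fun z _ => ?_
  by_cases hxy : y ∈ N x <;> by_cases hyz : z ∈ N y <;> by_cases hxz : z ∈ N x <;>
    simp [hxy, hyz, hxz]

theorem card_filter_pairwise_notMem [Fintype α] (S : Finset α) (N : α → Finset α)
    (hN : ∀ x y, y ∈ N x ↔ x ∈ N y) (hNS : ∀ x ∈ S, N x ⊆ S) :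
    (#{u : Fin 3 → α | (∀ i, u i ∈ S) ∧ ∀ i j, i ≠ j → u j ∉ N (u i)} : ℤ) =
      (#S : ℤ) ^ 3 - 3 * #S * ∑ x ∈ S, (#(N x) : ℤ) + 3 * ∑ x ∈ S, (#(N x) : ℤ) ^ 2
        - ∑ x ∈ S, ∑ y ∈ N x, (#(N x ∩ N y) : ℤ) := by
  have degree {x : α} (hx : x ∈ S) : ∑ y ∈ S, (if y ∈ N x then (1 : ℤ) else 0) = #(N x) := by
    rw [sum_boole, filter_mem_eq_inter, inter_eq_right.2 (hNS x hx)]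
  have triangles {x : α} (hx : x ∈ S) :
      ∑ y ∈ S, ∑ z ∈ S, (if y ∈ N x then (1 : ℤ) else 0) * (if z ∈ N y then 1 else 0) *
        (if z ∈ N x then 1 else 0) = ∑ y ∈ N x, (#(N x ∩ N y) : ℤ) := by
    calc _ = ∑ y ∈ S, if y ∈ N x then (#(N x ∩ N y) : ℤ) else 0 := by
          refine sum_congr rfl fun y _ => ?_
          split_ifs
          · have inter_subset : N x ∩ N y ⊆ S := inter_subset_left.trans (hNS x hx)
            simp only [one_mul, ite_zero_mul_ite_zero, ← mem_inter, sum_boole, filter_mem_eq_inter,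
              inter_comm (N y), inter_eq_right.2 inter_subset]
          · simp only [zero_mul, sum_const_zero]
      _ = _ := by rw [sum_ite_mem, inter_eq_right.2 (hNS x hx)]
  rw [card_filter_pairwise_notMem_eq_sum S N hN, sum_one_sub_mul_one_sub_mul_one_sub S
    (fun x y => if y ∈ N x then (1 : ℤ) else 0) fun x y => by simp only [hN x y]]
  have degree_sq : ∑ x ∈ S, (∑ y ∈ S, if y ∈ N x then (1 : ℤ) else 0) ^ 2 =
      ∑ x ∈ S, (#(N x) : ℤ) ^ 2 := sum_congr rfl fun x hx => by rw [degree hx]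
  rw [sum_congr rfl fun x hx => degree hx, sum_congr rfl fun x hx => triangles hx, degree_sq]

end IndependentTriples

section CycleType

variable {α : Type*} [Fintype α] [DecidableEq α]

theorem pow_apply_eq_self_iff_of_prime {π : Perm α} {x : α} (hx : x ∈ π.support) {k : ℕ}
    (hk : k.Prime) : (π ^ k) x = x ↔ #(π.cycleOf x).support = k := by
  have hx' : x ∈ (π.cycleOf x).support :=
    Perm.mem_support_cycleOf_iff.2 ⟨Perm.SameCycle.refl _ _, hx⟩
  have two_le := (π.isCycle_cycleOf (Perm.mem_support.1 hx)).two_le_card_support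
  rw [(π.isCycleOn_support_cycleOf x).pow_apply_eq hx', Nat.dvd_prime hk]
  omega

theorem card_filter_pow_apply_eq_self (π : Perm α) {k : ℕ} (hk : k.Prime) :
    #{x ∈ π.support | (π ^ k) x = x} = k * π.cycleType.count k := by
  rw [← card_filter_card_support_cycleOf_eq]
  exact congrArg card (filter_congr fun x hx => pow_apply_eq_self_iff_of_prime hx hk)

theorem card_support_add_count_one_parts_partition (π : Perm α) :
    #π.support + π.partition.parts.count 1 = Fintype.card α := by
  have h1 : 1 ∉ π.cycleType := fun h => (Perm.two_le_of_mem_cycleType h).not_gt one_lt_two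
  rw [Perm.parts_partition, Multiset.count_add, Multiset.count_eq_zero.2 h1,
    Multiset.count_replicate_self, zero_add, Nat.add_sub_cancel' π.support.card_le_univ]

theorem count_parts_partition_of_one_lt (π : Perm α) {k : ℕ} (hk : 1 < k) :
    π.partition.parts.count k = π.cycleType.count k := by
  rw [Perm.parts_partition, Multiset.count_add, Multiset.count_replicate, if_neg hk.ne, add_zero]

theorem sum_support_ite_apply_apply_eq {R : Type*} [CommRing R] (π : Perm α) (a b c : R) :
    ∑ x ∈ π.support, (if π (π x) = x then a else if π (π (π x)) = x then b else c) =
      c * #π.support + 2 * (a - c) * π.cycleType.count 2 + 3 * (b - c) * π.cycleType.count 3 := by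
  have card_two : #{x ∈ π.support | π (π x) = x} = 2 * π.cycleType.count 2 :=
    card_filter_pow_apply_eq_self π Nat.prime_two
  have card_three : #{x ∈ π.support | π (π (π x)) = x} = 3 * π.cycleType.count 3 :=
    card_filter_pow_apply_eq_self π Nat.prime_three
  calc _ = ∑ x ∈ π.support, (c + (a - c) * (if π (π x) = x then 1 else 0)
        + (b - c) * (if π (π (π x)) = x then 1 else 0)) := by
        refine sum_congr rfl fun x hx => ?_
        by_cases h2 : π (π x) = x
        · simp [h2, Perm.mem_support.1 hx]
        · by_cases h3 : π (π (π x)) = x <;> simp [h2, h3]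
    _ = _ := by
        simp only [sum_add_distrib, ← mul_sum, sum_boole, card_two, card_three, sum_const,
          nsmul_eq_mul]
        push_cast
        ring

end CycleType

section ClosedNeighbors

variable {α : Type*} [DecidableEq α]

/-- The closed neighbourhood of `x` in the graph that joins every point to its image under `π`.
Support points `u i` avoid each other's closed neighbourhoods exactly when the `u i` and `π (u i)`
are all distinct. -/
def closedNeighbors (π : Perm α) (x : α) : Finset α := {x, π x, π.symm x}

theorem mem_closedNeighbors {π : Perm α} {x y : α} :
    y ∈ closedNeighbors π x ↔ y = x ∨ y = π x ∨ π y = x := by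
  simp only [closedNeighbors, mem_insert, mem_singleton, eq_symm_apply]

theorem mem_closedNeighbors_comm {π : Perm α} {x y : α} :
    y ∈ closedNeighbors π x ↔ x ∈ closedNeighbors π y := by
  grind [mem_closedNeighbors]

theorem closedNeighbors_subset_support [Fintype α] {π : Perm α} {x : α} (hx : x ∈ π.support) :
    closedNeighbors π x ⊆ π.support := by
  intro y
  simp only [mem_closedNeighbors, Perm.mem_support] at hx ⊢
  rintro (rfl | rfl | rfl) <;> simp_all

theorem sum_closedNeighbors {M : Type*} [AddCommMonoid M] {π : Perm α} {x : α} (h1 : π x ≠ x)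
    (h2 : π (π x) ≠ x) (f : α → M) :
    ∑ y ∈ closedNeighbors π x, f y = f x + (f (π x) + f (π.symm x)) := by
  have hx_succ : x ∉ ({π x, π.symm x} : Finset α) := by
    simp [h1.symm, eq_symm_apply, h1]
  have hx_pred : π x ≠ π.symm x := fun h => h2 (π.eq_symm_apply.1 h)
  rw [closedNeighbors, sum_insert hx_succ, sum_pair hx_pred]

theorem card_closedNeighbors {π : Perm α} {x : α} (hx : π x ≠ x) :
    #(closedNeighbors π x) = if π (π x) = x then 2 else 3 := by
  split_ifs with h
  · have symm_eq : π.symm x = π x := by rw [symm_apply_eq, h]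
    rw [closedNeighbors, symm_eq, pair_eq_singleton, card_pair hx.symm]
  · rw [card_eq_sum_ones, sum_closedNeighbors hx h]
    rfl

theorem closedNeighbors_eq_of_mem {π : Perm α} {x y : α}
    (h : π (π x) = x ∨ π (π (π x)) = x) (hy : y ∈ closedNeighbors π x) :
    closedNeighbors π y = closedNeighbors π x := by
  ext z
  simp only [mem_closedNeighbors] at hy ⊢
  grind [π.injective.eq_iff]

theorem card_closedNeighbors_inter_apply {π : Perm α} {x : α} (hx : π x ≠ x)
    (h : π (π (π x)) ≠ x) : #(closedNeighbors π x ∩ closedNeighbors π (π x)) = 2 := by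
  have inter_eq : closedNeighbors π x ∩ closedNeighbors π (π x) = {x, π x} := by
    ext z
    simp only [mem_inter, mem_closedNeighbors, mem_insert, mem_singleton, π.injective.eq_iff]
    grind
  rw [inter_eq, card_pair hx.symm]

theorem sum_card_closedNeighbors_inter {π : Perm α} {x : α} (hx : π x ≠ x) :
    ∑ y ∈ closedNeighbors π x, #(closedNeighbors π x ∩ closedNeighbors π y) =
      if π (π x) = x then 4 else if π (π (π x)) = x then 9 else 7 := by
  have sum_of_short (h : π (π x) = x ∨ π (π (π x)) = x) :
      ∑ y ∈ closedNeighbors π x, #(closedNeighbors π x ∩ closedNeighbors π y) =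
        #(closedNeighbors π x) * #(closedNeighbors π x) :=
    sum_const_nat fun y hy => by rw [closedNeighbors_eq_of_mem h hy, inter_self]
  have hcard := card_closedNeighbors hx
  split_ifs with h2 h3
  · rw [sum_of_short (.inl h2), hcard, if_pos h2]
  · rw [sum_of_short (.inr h3), hcard, if_neg h2]
  · have h_pred : #(closedNeighbors π x ∩ closedNeighbors π (π.symm x)) = 2 := by
      have h := card_closedNeighbors_inter_apply (π := π) (x := π.symm x)
      simp only [apply_symm_apply, inter_comm] at h
      exact h (by rwa [ne_eq, eq_symm_apply]) (by rwa [ne_eq, eq_symm_apply])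
    rw [sum_closedNeighbors hx h2, inter_self, hcard, if_neg h2, h_pred,
      card_closedNeighbors_inter_apply hx h3]
    rfl

theorem sum_support_card_closedNeighbors_pow [Fintype α] (π : Perm α) (k : ℕ) :
    ∑ x ∈ π.support, (#(closedNeighbors π x) : ℤ) ^ k =
      3 ^ k * #π.support + 2 * (2 ^ k - 3 ^ k) * π.cycleType.count 2 := by
  calc _ = ∑ x ∈ π.support,
        (if π (π x) = x then (2 : ℤ) ^ k else if π (π (π x)) = x then 3 ^ k else 3 ^ k) :=
        sum_congr rfl fun x hx => by
          rw [card_closedNeighbors (Perm.mem_support.1 hx), ite_self]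
          split_ifs <;> rfl
    _ = _ := by
        rw [sum_support_ite_apply_apply_eq]
        ring

theorem sum_support_sum_card_closedNeighbors_inter [Fintype α] (π : Perm α) :
    ∑ x ∈ π.support, ∑ y ∈ closedNeighbors π x,
        (#(closedNeighbors π x ∩ closedNeighbors π y) : ℤ) =
      7 * #π.support - 6 * π.cycleType.count 2 + 6 * π.cycleType.count 3 := by
  calc _ = ∑ x ∈ π.support,
        (if π (π x) = x then (4 : ℤ) else if π (π (π x)) = x then 9 else 7) :=
        sum_congr rfl fun x hx => by
          exact_mod_cast sum_card_closedNeighbors_inter (Perm.mem_support.1 hx)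
    _ = _ := by
        rw [sum_support_ite_apply_apply_eq]
        ring

theorem injective_sumElim_comp_iff {ι : Type*} [Fintype α] {π : Perm α} {u : ι → α} :
    Function.Injective (Sum.elim u (π ∘ u)) ↔
      (∀ i, u i ∈ π.support) ∧ ∀ i j, i ≠ j → u j ∉ closedNeighbors π (u i) := by
  rw [Sum.elim_injective, π.injective.of_comp_iff]
  simp only [Function.Injective, mem_closedNeighbors, Perm.mem_support, Function.comp_apply]
  grind

end ClosedNeighbors

section Embeddings

variable {α : Type*} [Fintype α] [DecidableEq α]

theorem card_filter_comp_inl_eq_comp_inr {ι : Type*} [Fintype ι] [DecidableEq ι] (f : α → α) :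
    #{t : ι ⊕ ι ↪ α | f ∘ t ∘ Sum.inl = t ∘ Sum.inr} =
      #{u : ι → α | Function.Injective (Sum.elim u (f ∘ u))} := by
  refine card_bij' (fun t _ => t ∘ Sum.inl)
    (fun u hu => ⟨Sum.elim u (f ∘ u), (mem_filter_univ u).1 hu⟩) ?_ ?_ ?_ ?_
  · intro t ht
    have h : Sum.elim (t ∘ Sum.inl) (f ∘ t ∘ Sum.inl) = t := by
      ext (i | i)
      · rfl
      · exact congrFun ((mem_filter_univ t).1 ht) i
    rw [mem_filter_univ, h]
    exact t.injective
  · simp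
  · intro t ht
    ext (i | i)
    · rfl
    · exact congrFun ((mem_filter_univ t).1 ht) i
  · simp

theorem descFactorial_mul_card_filter_comp_inl_eq_comp_inr {ι : Type*} [Fintype ι]
    {C : Finset (Perm α)} (hC : ∀ g σ, g * σ * g⁻¹ ∈ C ↔ σ ∈ C) (t₀ : ι ⊕ ι ↪ α) :
    (Fintype.card α).descFactorial (Fintype.card ι + Fintype.card ι) *
        #(C.filter fun σ : Perm α => σ ∘ t₀ ∘ Sum.inl = t₀ ∘ Sum.inr) =
      ∑ σ ∈ C, #{t : ι ⊕ ι ↪ α | ⇑σ ∘ t ∘ Sum.inl = t ∘ Sum.inr} := by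
  classical
  have : MulAction.IsPretransitive (Perm α) (ι ⊕ ι ↪ α) := ⟨Perm.exists_smul_eq_embedding⟩
  rw [← Fintype.card_sum, ← Fintype.card_embedding_eq]
  exact card_mul_card_filter_rel
    (R := fun (σ : Perm α) (t : ι ⊕ ι ↪ α) => σ ∘ t ∘ Sum.inl = t ∘ Sum.inr) hC
    (fun g σ t => by simp [funext_iff, Function.Embedding.smul_apply]) t₀

theorem card_filter_comp_inl_eq_comp_inr_fin_three (π : Perm α) :
    (#{t : Fin 3 ⊕ Fin 3 ↪ α | ⇑π ∘ t ∘ Sum.inl = t ∘ Sum.inr} : ℤ) =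
      (#π.support : ℤ) ^ 3 - 9 * (#π.support : ℤ) ^ 2 + 20 * #π.support
        + 6 * π.cycleType.count 2 * #π.support - 24 * π.cycleType.count 2
        - 6 * π.cycleType.count 3 := by
  have degree_sum := sum_support_card_closedNeighbors_pow π 1
  simp only [pow_one] at degree_sum
  have card_injective : #{u : Fin 3 → α | Function.Injective (Sum.elim u (π ∘ u))} =
      #{u : Fin 3 → α | (∀ i, u i ∈ π.support) ∧
        ∀ i j, i ≠ j → u j ∉ closedNeighbors π (u i)} :=
    congrArg card (filter_congr fun _ _ => injective_sumElim_comp_iff)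
  rw [card_filter_comp_inl_eq_comp_inr π, card_injective,
    card_filter_pairwise_notMem _ _ (fun _ _ => mem_closedNeighbors_comm)
      (fun _ => closedNeighbors_subset_support), degree_sum, sum_support_card_closedNeighbors_pow,
    sum_support_sum_card_closedNeighbors_inter]
  ring

end Embeddings

theorem conj_mem_conjClass_iff {n : ℕ} {lam : n.Partition} (g σ : Perm (Fin n)) :
    g * σ * g⁻¹ ∈ conjClass n lam ↔ σ ∈ conjClass n lam := by
  have h : σ.partition = (g * σ * g⁻¹).partition :=
    Perm.partition_eq_of_isConj.1 (isConj_iff.2 ⟨g, rfl⟩)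
  simp only [conjClass, mem_filter_univ, h]

theorem card_filter_comp_inl_eq_comp_inr_fin_three_of_mem_conjClass {n : ℕ} {lam : n.Partition}
    {π : Perm (Fin n)} (hπ : π ∈ conjClass n lam) :
    (#{t : Fin 3 ⊕ Fin 3 ↪ Fin n | ⇑π ∘ t ∘ Sum.inl = t ∘ Sum.inr} : ℤ) =
      ((n : ℤ) - lam.parts.count 1) ^ 3 - 9 * ((n : ℤ) - lam.parts.count 1) ^ 2
        + 20 * ((n : ℤ) - lam.parts.count 1)
        + 6 * lam.parts.count 2 * ((n : ℤ) - lam.parts.count 1)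
        - 24 * lam.parts.count 2 - 6 * lam.parts.count 3 := by
  have parts_eq : π.partition.parts = lam.parts := (mem_filter_univ π).1 hπ
  have card_support : (#π.support : ℤ) = n - lam.parts.count 1 := by
    rw [← parts_eq, eq_sub_iff_add_eq]
    exact_mod_cast (card_support_add_count_one_parts_partition π).trans (Fintype.card_fin n)
  rw [card_filter_comp_inl_eq_comp_inr_fin_three, card_support, ← parts_eq,
    ← count_parts_partition_of_one_lt π one_lt_two,
    ← count_parts_partition_of_one_lt π (k := 3) (by norm_num)]

theorem cast_descFactorial_six (n : ℕ) :
    (n.descFactorial 6 : ℤ) = (n : ℤ) * ((n : ℤ) - 1) * ((n : ℤ) - 2) * ((n : ℤ) - 3) *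
      ((n : ℤ) - 4) * ((n : ℤ) - 5) := by
  rw [← descPochhammer_eval_eq_descFactorial]
  simp only [descPochhammer_succ_right, descPochhammer_zero]
  simp

theorem injective_vec_three {α : Type*} {a b c : α} :
    Function.Injective ![a, b, c] ↔ a ≠ b ∧ a ≠ c ∧ b ≠ c := by
  rw [← List.nodup_ofFn]
  simp [and_assoc]

theorem stmt5 (n : ℕ) (hn : 6 ≤ n) (lam : n.Partition)
    (p q r : ℕ) (hp : p = lam.parts.count 1) (hq : q = lam.parts.count 2)
    (hr : r = lam.parts.count 3)
    (i₁ i₂ i₃ : Fin n) (h12 : i₁ < i₂) (h23 : i₂ < i₃)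
    (a₄ a₅ a₆ : Fin n) (ha45 : a₄ ≠ a₅) (ha46 : a₄ ≠ a₆) (ha56 : a₅ ≠ a₆)
    (ha41 : a₄ ≠ i₁) (ha42 : a₄ ≠ i₂) (ha43 : a₄ ≠ i₃)
    (ha51 : a₅ ≠ i₁) (ha52 : a₅ ≠ i₂) (ha53 : a₅ ≠ i₃)
    (ha61 : a₆ ≠ i₁) (ha62 : a₆ ≠ i₂) (ha63 : a₆ ≠ i₃) :
    (n : ℤ) * ((n : ℤ) - 1) * ((n : ℤ) - 2) * ((n : ℤ) - 3) * ((n : ℤ) - 4) * ((n : ℤ) - 5) *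
        (((conjClass n lam).filter fun π => π i₁ = a₄ ∧ π i₂ = a₅ ∧ π i₃ = a₆).card : ℤ)
      = ((n : ℤ) ^ 3 - (n : ℤ) ^ 2 * (3 * (p : ℤ) + 9)
          + (n : ℤ) * (3 * (p : ℤ) ^ 2 + 18 * (p : ℤ) + 6 * (q : ℤ) + 20)
          - (p : ℤ) ^ 3 - 9 * (p : ℤ) ^ 2 - 20 * (p : ℤ) - 6 * (p : ℤ) * (q : ℤ)
          - 24 * (q : ℤ) - 6 * (r : ℤ)) *
        ((conjClass n lam).card : ℤ) := by
  let t₀ : Fin 3 ⊕ Fin 3 ↪ Fin n := ⟨Sum.elim ![i₁, i₂, i₃] ![a₄, a₅, a₆],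
    (injective_vec_three.2 ⟨h12.ne, (h12.trans h23).ne, h23.ne⟩).sumElim
      (injective_vec_three.2 ⟨ha45, ha46, ha56⟩) (by simp [Fin.forall_fin_succ, Ne.symm, *])⟩
  have filter_eq : (conjClass n lam).filter (fun π : Perm _ => π ∘ t₀ ∘ Sum.inl = t₀ ∘ Sum.inr) =
      (conjClass n lam).filter fun π => π i₁ = a₄ ∧ π i₂ = a₅ ∧ π i₃ = a₆ := by
    simp [t₀, funext_iff, Fin.forall_fin_succ]
  have double_count := congrArg (Nat.cast (R := ℤ)) <|
    descFactorial_mul_card_filter_comp_inl_eq_comp_inr (conj_mem_conjClass_iff (lam := lam)) t₀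
  have card_eq (σ : Perm (Fin n)) (hσ : σ ∈ conjClass n lam) :=
    card_filter_comp_inl_eq_comp_inr_fin_three_of_mem_conjClass hσ
  rw [filter_eq, Fintype.card_fin, Fintype.card_fin, Nat.cast_mul, cast_descFactorial_six,
    Nat.cast_sum, sum_congr rfl card_eq, sum_const, nsmul_eq_mul] at double_count
  rw [double_count, hp, hq, hr]
  ring
end
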